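/- Let F : ℝ^m → ℝ be L-smooth, set L' = L + 1, and let (z_k) be generated by z_{k+1} = z_k + t_k s_k with ‖g_k − ∇F(z_k)‖₂ ≤ δ_k, c₁‖g_k‖₂² ≤ −g_kᵀ s_k, and ‖s_k‖₂ ≤ c₂‖g_k‖₂ with c₁, c₂ > 0. Fix c̃ ∈ (0, c₁). Then for every index k such that t_k ≤ 2(c₁ − c̃)/(c₂² L'), one has F(z_{k+1}) ≤ F(z_k) − c̃ t_k ‖g_k‖₂² + δ_k²/2. -/

import Mathlib

open scoped RealInnerProductSpace

/-!
A bound `‖f' y - f' x‖ ≤ L * ‖y - x‖` at a fixed `x` gives the quadratic upper model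
`f (x + d) ≤ f x + f' x d + L / 2 * ‖d‖ ^ 2`. For `d = t • s`, replacing `f' x` by the inexact `g`
costs `t * δ * ‖s‖ ≤ δ ^ 2 / 2 + t ^ 2 * ‖s‖ ^ 2 / 2`, which raises the curvature constant from `L`
to `L + 1`. The conditions on `s` bound the resulting model by
`f x - c₁ * t * ‖g‖ ^ 2 + (L + 1) / 2 * t ^ 2 * c₂ ^ 2 * ‖g‖ ^ 2 + δ ^ 2 / 2`, and the step size
restriction says exactly that the quadratic term uses up at most `(c₁ - c) * t * ‖g‖ ^ 2`.
No inner product is involved: through the Riesz isometry, gradients are elements of the dual space.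
-/

lemma nonneg_of_forall_norm_sub_le {E G : Type*} [NormedAddCommGroup E] [Nontrivial E]
    [SeminormedAddCommGroup G] {L : ℝ} {φ : E → G} {x : E}
    (hφ : ∀ y, ‖φ y - φ x‖ ≤ L * ‖y - x‖) : 0 ≤ L := by
  obtain ⟨y, hyx⟩ := exists_ne x
  exact nonneg_of_mul_nonneg_left ((norm_nonneg _).trans (hφ y)) (norm_sub_pos_iff.2 hyx)

theorem norm_sub_sub_fderiv_le_of_forall_norm_sub_le {E G : Type*} [NormedAddCommGroup E]
    [NormedSpace ℝ E] [NormedAddCommGroup G] [NormedSpace ℝ G] {L : ℝ}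
    {f : E → G} {f' : E → E →L[ℝ] G} {x : E} (hf : ∀ y, HasFDerivAt f (f' y) y)
    (hf' : ∀ y, ‖f' y - f' x‖ ≤ L * ‖y - x‖) (d : E) :
    ‖f (x + d) - f x - f' x d‖ ≤ L / 2 * ‖d‖ ^ 2 := by
  have remainder_deriv (u : ℝ) : HasDerivAt (fun u : ℝ ↦ f (x + u • d) - f x - u • f' x d)
      ((f' (x + u • d) - f' x) d) u := by
    have line_deriv : HasDerivAt (fun u : ℝ ↦ x + u • d) d u := by
      simpa using ((hasDerivAt_id u).smul_const d).const_add x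
    simpa using (((hf _).comp_hasDerivAt u line_deriv).sub_const (f x)).fun_sub
      ((hasDerivAt_id u).smul_const (f' x d))
  have bound_deriv (u : ℝ) :
      HasDerivAt (fun u : ℝ ↦ L / 2 * ‖d‖ ^ 2 * u ^ 2) (L * u * ‖d‖ ^ 2) u :=
    ((hasDerivAt_pow 2 u).const_mul (L / 2 * ‖d‖ ^ 2)).congr_deriv (by push_cast; ring)
  have deriv_le (u : ℝ) (hu : u ∈ Set.Ico (0 : ℝ) 1) :
      ‖(f' (x + u • d) - f' x) d‖ ≤ L * u * ‖d‖ ^ 2 :=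
    calc ‖(f' (x + u • d) - f' x) d‖
        ≤ L * ‖x + u • d - x‖ * ‖d‖ := ContinuousLinearMap.le_of_opNorm_le _ (hf' _) d
      _ = L * u * ‖d‖ ^ 2 := by
        rw [add_sub_cancel_left, norm_smul, Real.norm_of_nonneg hu.1]
        ring
  simpa using image_norm_le_of_norm_deriv_right_le_deriv_boundary
    (fun u _ ↦ (remainder_deriv u).continuousAt.continuousWithinAt)
    (fun u _ ↦ (remainder_deriv u).hasDerivWithinAt) (by simp) bound_deriv deriv_le
    (Set.right_mem_Icc.2 zero_le_one)

section InexactDescent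

variable {E : Type*} [NormedAddCommGroup E] [NormedSpace ℝ E]
  {f : E → ℝ} {f' : E → StrongDual ℝ E} {L : ℝ} {x s : E} {g : StrongDual ℝ E}
  {t δ c₁ c₂ c : ℝ}

theorem apply_add_smul_le_of_inexact_fderiv (hf : ∀ y, HasFDerivAt f (f' y) y)
    (hf' : ∀ y, ‖f' y - f' x‖ ≤ L * ‖y - x‖) (ht : 0 ≤ t) (hg : ‖g - f' x‖ ≤ δ) :
    f (x + t • s) ≤ f x + t * g s + (L + 1) / 2 * (t * ‖s‖) ^ 2 + δ ^ 2 / 2 := by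
  have exact_model : f (x + t • s) - f x - t * f' x s ≤ L / 2 * (t * ‖s‖) ^ 2 := by
    simpa [norm_smul, abs_of_nonneg ht] using
      (Real.le_norm_self _).trans (norm_sub_sub_fderiv_le_of_forall_norm_sub_le hf hf' (t • s))
  have error_le : f' x s - g s ≤ δ * ‖s‖ := by
    rw [norm_sub_rev] at hg
    exact (Real.le_norm_self _).trans ((f' x - g).le_of_opNorm_le hg s)
  have young : δ * (t * ‖s‖) ≤ δ ^ 2 / 2 + (t * ‖s‖) ^ 2 / 2 := by
    linarith [two_mul_le_add_sq δ (t * ‖s‖)]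
  linarith [mul_le_mul_of_nonneg_left error_le ht]

theorem stmt_10_general (hf : ∀ y, HasFDerivAt f (f' y) y)
    (hf' : ∀ y, ‖f' y - f' x‖ ≤ L * ‖y - x‖) (ht : 0 ≤ t) (hc₂ : 0 < c₂)
    (hg : ‖g - f' x‖ ≤ δ) (hdesc : c₁ * ‖g‖ ^ 2 ≤ -g s) (hs : ‖s‖ ≤ c₂ * ‖g‖)
    (hstep : t ≤ 2 * (c₁ - c) / (c₂ ^ 2 * (L + 1))) :
    f (x + t • s) ≤ f x - c * t * ‖g‖ ^ 2 + δ ^ 2 / 2 := by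
  rcases subsingleton_or_nontrivial E with _ | _
  · rw [Subsingleton.elim (x + t • s) x, Subsingleton.elim g 0, norm_zero]
    linarith [sq_nonneg δ]
  have hL : 0 < L + 1 := by linarith [nonneg_of_forall_norm_sub_le hf']
  have linear_le : t * g s ≤ -(c₁ * t * ‖g‖ ^ 2) := by
    linarith [mul_le_mul_of_nonneg_left hdesc ht]
  have quadratic_le : (L + 1) / 2 * (t * ‖s‖) ^ 2 ≤ (c₁ - c) * t * ‖g‖ ^ 2 := by
    rw [le_div_iff₀ (by positivity)] at hstep
    calc (L + 1) / 2 * (t * ‖s‖) ^ 2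
        ≤ (L + 1) / 2 * (t * (c₂ * ‖g‖)) ^ 2 := by gcongr
      _ = t * (c₂ ^ 2 * (L + 1)) * (t * ‖g‖ ^ 2 / 2) := by ring
      _ ≤ 2 * (c₁ - c) * (t * ‖g‖ ^ 2 / 2) := by gcongr
      _ = (c₁ - c) * t * ‖g‖ ^ 2 := by ring
  linarith [apply_add_smul_le_of_inexact_fderiv (s := s) hf hf' ht hg]

end InexactDescent

/-- descent inequality when the step size is small enough. -/
theorem stmt_10 (m : ℕ) (F : EuclideanSpace ℝ (Fin m) → ℝ) (L L' : ℝ)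
    (hdiff : Differentiable ℝ F)
    (hlip : ∀ x y : EuclideanSpace ℝ (Fin m), ‖gradient F x - gradient F y‖ ≤ L * ‖x - y‖)
    (hL' : L' = L + 1)
    (z s g : ℕ → EuclideanSpace ℝ (Fin m)) (t δ : ℕ → ℝ)
    (c₁ c₂ : ℝ) (hc₁ : 0 < c₁) (hc₂ : 0 < c₂)
    (ht : ∀ k, 0 < t k) (hδ : ∀ k, 0 ≤ δ k)
    (hupd : ∀ k, z (k + 1) = z k + t k • s k)
    (herr : ∀ k, ‖g k - gradient F (z k)‖ ≤ δ k)
    (hdesc : ∀ k, c₁ * ‖g k‖ ^ 2 ≤ -⟪g k, s k⟫)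
    (hbnd : ∀ k, ‖s k‖ ≤ c₂ * ‖g k‖)
    (c : ℝ) (hc0 : 0 < c) (hcc₁ : c < c₁) :
    ∀ k, t k ≤ 2 * (c₁ - c) / (c₂ ^ 2 * L') →
      F (z (k + 1)) ≤ F (z k) - c * t k * ‖g k‖ ^ 2 + (δ k) ^ 2 / 2 := by
  intro k hk
  let toDual := InnerProductSpace.toDual ℝ (EuclideanSpace ℝ (Fin m))
  have dual_error : ‖toDual (g k) - toDual (gradient F (z k))‖ ≤ δ k := by
    simpa only [← map_sub, LinearIsometryEquiv.norm_map] using herr k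
  rw [hL'] at hk
  rw [hupd k, ← toDual.norm_map (g k)]
  exact stmt_10_general (fun x ↦ (hdiff x).hasGradientAt.hasFDerivAt)
    (by simpa only [← map_sub, LinearIsometryEquiv.norm_map] using (hlip · (z k)))
    (ht k).le hc₂ dual_error (by simpa [toDual] using hdesc k) (by simpa using hbnd k) hk
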